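/- Let K be a p-adic field containing the p-th roots of unity with absolute ramification index e_K, and let κ ∈ K^× with ord_{π_K}(κ) not divisible by p. Then L = K(κ^{1/p}) is a totally ramified cyclic extension of degree p with abelian conductor exponent f(L/K) = p·e_K/(p−1) + 1, and this is the maximal possible conductor exponent for cyclic degree-p extensions of K. -/

import Mathlib

universe v

/-- An (additive) normalized discrete valuation on `K`. -/
def IsNormalizedVal (p : ℕ) (K : Type*) [Field K] (v : K → ℤ) : Prop :=
  (∀ x y : K, x ≠ 0 → y ≠ 0 → v (x * y) = v x + v y) ∧
  (∀ x y : K, x ≠ 0 → y ≠ 0 → x + y ≠ 0 → min (v x) (v y) ≤ v (x + y)) ∧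
  (∃ π : K, π ≠ 0 ∧ v π = 1) ∧
  (0 < v ((p : K)))

/-- The abelian conductor exponent of `L/K`, defined via norm groups: the smallest `n ≥ 0`
such that `U_K^{(n)}` is contained in the image of the norm map `N_{L/K}`. -/
noncomputable def condExp {K : Type*} [Field K] (vK : K → ℤ)
    (L : Type v) [Field L] [Algebra K L] : ℕ :=
  sInf {n : ℕ | ∀ u : K, u ≠ 0 → vK u = 0 →
    (n = 0 ∨ u = 1 ∨ (n : ℤ) ≤ vK (u - 1)) →
      ∃ x : L, x ≠ 0 ∧ Algebra.norm K x = u}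

/-!
Let `λ = ζ - 1`, so that `(p - 1) * v λ = v p`. The substitution `Y = 1 + λ * X` turns the Kummer
polynomial `Y ^ p - (1 + λ ^ p * t)` into one reducing to the Artin-Schreier polynomial
`X ^ p - X - t`. If `v t > 0`, Hensel's lemma shows that `1 + λ ^ p * t` is a `p`-th power, hence a
norm from every extension of degree `p`; this bounds the conductor by `p * v λ + 1`. If the residue
of `t` is not of the form `y ^ p - y`, then `u = 1 + λ ^ p * t` generates an unramified Kummer
extension `M = K(u ^ (1 / p))`, all of whose norms have valuation divisible by `p`. By the symmetry
of the norm residue symbol, `u` being a norm from `L = K(κ ^ (1 / p))` would make `κ` a norm from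
`M`, which is impossible when `p` does not divide `v κ`; so the bound is attained by `L`.

The symmetry is elementary: if `u = N x` and `σ` generates the Galois group of `L`, then
`T = (y ↦ x * σ y)` satisfies `T ^ p = u` and makes `L` a one-dimensional `M`-vector space, on which
multiplication by `κ ^ (1 / p)` is semilinear.
-/

open Polynomial IsLocalRing WithZero

namespace IsNormalizedVal

variable {p : ℕ} {K : Type*} [Field K] {v : K → ℤ}

theorem map_one_eq_zero (h : IsNormalizedVal p K v) : v 1 = 0 := by
  simpa using h.1 1 1 one_ne_zero one_ne_zero

open Classical in
/-- The multiplicative valuation `x ↦ exp (-v x)` attached to the additive valuation `v`, which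
makes Mathlib's theory of valuation rings available. As `v 0` is a junk value, `0` is sent to `0`
separately. -/
noncomputable def valuation (h : IsNormalizedVal p K v) : Valuation K ℤᵐ⁰ where
  toFun x := if x = 0 then 0 else exp (-v x)
  map_zero' := if_pos rfl
  map_one' := by simp [h.map_one_eq_zero]
  map_mul' x y := by
    by_cases hx : x = 0
    · simp [hx]
    by_cases hy : y = 0
    · simp [hy]
    rw [if_neg (mul_ne_zero hx hy), if_neg hx, if_neg hy, h.1 x y hx hy, neg_add, exp_add]
  map_add_le_max' x y := by
    by_cases hx : x = 0
    · simp [hx]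
    by_cases hy : y = 0
    · simp [hy]
    by_cases hxy : x + y = 0
    · simp [hxy]
    rw [if_neg hx, if_neg hy, if_neg hxy, le_max_iff, exp_le_exp, exp_le_exp, neg_le_neg_iff,
      neg_le_neg_iff, ← min_le_iff]
    exact h.2.1 x y hx hy hxy

variable (h : IsNormalizedVal p K v) {x : K}

theorem valuation_apply (hx : x ≠ 0) : h.valuation x = exp (-v x) := if_neg hx

theorem one_lt_valuation_iff (hx : x ≠ 0) : 1 < h.valuation x ↔ v x < 0 := by
  rw [h.valuation_apply hx, ← exp_zero, exp_lt_exp, neg_pos]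

theorem valuation_lt_one_iff (hx : x ≠ 0) : h.valuation x < 1 ↔ 0 < v x := by
  rw [h.valuation_apply hx, ← exp_zero, exp_lt_exp, neg_neg_iff_pos]

theorem valuation_eq_one_iff (hx : x ≠ 0) : h.valuation x = 1 ↔ v x = 0 := by
  rw [h.valuation_apply hx, ← exp_zero, exp_inj, neg_eq_zero]

theorem valuation_inj {y : K} (hx : x ≠ 0) (hy : y ≠ 0) :
    h.valuation x = h.valuation y ↔ v x = v y := by
  rw [h.valuation_apply hx, h.valuation_apply hy, exp_inj, neg_inj]

theorem map_eq_zero_of_isUnit {w : h.valuation.integer} (hw : IsUnit w) : v w = 0 :=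
  have hw0 : (w : K) ≠ 0 := mod_cast hw.ne_zero
  (h.valuation_eq_one_iff hw0).mp
    ((Valuation.integer.integers h.valuation).isUnit_iff_valuation_eq_one.mp hw)

theorem map_pow (h : IsNormalizedVal p K v) (hx : x ≠ 0) (n : ℕ) : v (x ^ n) = n * v x := by
  have := h.valuation.map_pow x n
  rw [h.valuation_apply hx, h.valuation_apply (pow_ne_zero n hx), ← exp_nsmul, exp_inj] at this
  simpa using this

end IsNormalizedVal

/-! ### Symmetry of norms between Kummer extensions -/

theorem mulLeft_comp_algEquiv_pow_apply {R A : Type*} [CommSemiring R] [CommSemiring A]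
    [Algebra R A] (σ : A ≃ₐ[R] A) (x y : A) (i : ℕ) :
    ((LinearMap.mulLeft R x ∘ₗ σ.toLinearMap) ^ i) y =
      (∏ j ∈ Finset.range i, (σ ^ j) x) * (σ ^ i) y := by
  induction i with
  | zero => simp
  | succ i ih =>
    rw [pow_succ', Module.End.mul_apply, ih, Finset.prod_range_succ']
    simp only [LinearMap.comp_apply, LinearMap.mulLeft_apply, AlgEquiv.toLinearMap_apply, map_mul,
      map_prod, pow_succ', AlgEquiv.mul_apply, pow_zero, AlgEquiv.one_apply]
    ring

/-- `α` is an `n`-th root of `a` generating the degree `n` Kummer extension `L = K(α)`. The degree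
condition encodes the irreducibility of `X ^ n - C a`, so that `K`-algebra maps out of `L`
correspond to `n`-th roots of `a`. -/
structure IsKummerGenerator (K : Type*) {L : Type*} [Field K] [Field L] [Algebra K L]
    (n : ℕ) (a : K) (α : L) : Prop where
  pow_eq : α ^ n = algebraMap K L a
  adjoin_eq_top : IntermediateField.adjoin K {α} = ⊤
  finrank_eq : Module.finrank K L = n

namespace IsKummerGenerator

variable {K L M : Type*} [Field K] [Field L] [Field M] [Algebra K L] [Algebra K M]
  {n : ℕ} [NeZero n] {ζ a b : K} {α : L} {β : M}

theorem finiteDimensional (h : IsKummerGenerator K n a α) : FiniteDimensional K L :=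
  .of_finrank_pos (h.finrank_eq ▸ Nat.pos_of_neZero n)

theorem minpoly_eq (h : IsKummerGenerator K n a α) : minpoly K α = X ^ n - C a := by
  have := h.finiteDimensional
  have hdeg : (minpoly K α).natDegree = n :=
    ((Field.primitive_element_iff_minpoly_natDegree_eq K α).mp h.adjoin_eq_top).trans h.finrank_eq
  refine (eq_of_monic_of_dvd_of_natDegree_le (minpoly.monic (.of_finite K α))
    (monic_X_pow_sub_C a (NeZero.ne n)) (minpoly.dvd K α ?_) ?_).symm
  · simp [h.pow_eq]
  · rw [natDegree_X_pow_sub_C, hdeg]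

theorem algebra_adjoin_eq_top (h : IsKummerGenerator K n a α) : Algebra.adjoin K {α} = ⊤ := by
  have := h.finiteDimensional
  rw [← IntermediateField.adjoin_simple_toSubalgebra_of_isAlgebraic (.of_finite K α),
    h.adjoin_eq_top, IntermediateField.top_toSubalgebra]

theorem exists_algHom (h : IsKummerGenerator K n a α) {S : Type*} [Ring S] [Algebra K S] {s : S}
    (hs : s ^ n = algebraMap K S a) : ∃ φ : L →ₐ[K] S, φ α = s := by
  have := h.finiteDimensional
  have hα : IsIntegral K α := .of_finite K α
  have htop := h.algebra_adjoin_eq_top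
  have hroot : aeval s (minpoly K (PowerBasis.ofAdjoinEqTop' hα htop).gen) = 0 := by
    simp [h.minpoly_eq, hs]
  refine ⟨(PowerBasis.ofAdjoinEqTop' hα htop).lift s hroot, ?_⟩
  simpa using (PowerBasis.ofAdjoinEqTop' hα htop).lift_gen s hroot

theorem isGalois_and_isCyclic (h : IsKummerGenerator K n a α) (hζ : IsPrimitiveRoot ζ n) :
    IsGalois K L ∧ IsCyclic (L ≃ₐ[K] L) := by
  have := h.finiteDimensional
  have hprim : (primitiveRoots (Module.finrank K L) K).Nonempty :=
    ⟨ζ, by rwa [h.finrank_eq, mem_primitiveRoots (Nat.pos_of_neZero n)]⟩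
  have tfae := (isCyclic_tfae K L hprim).out 0 2
  exact tfae.mpr ⟨α, ⟨a, by rw [h.finrank_eq, h.pow_eq]⟩, h.adjoin_eq_top⟩

theorem ne_zero (h : IsKummerGenerator K n a α) (ha : a ≠ 0) : α ≠ 0 := by
  rintro rfl
  apply ha
  simpa [NeZero.ne n] using h.pow_eq.symm

theorem exists_algEquiv (h : IsKummerGenerator K n a α) (ha : a ≠ 0) (hζ : IsPrimitiveRoot ζ n) :
    ∃ σ : L ≃ₐ[K] L, σ α = ζ • α ∧
      ∀ x, algebraMap K L (Algebra.norm K x) = ∏ i ∈ Finset.range n, (σ ^ i) x := by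
  have := h.finiteDimensional
  have := (h.isGalois_and_isCyclic hζ).1
  obtain ⟨φ, hφ⟩ := h.exists_algHom (s := ζ • α) (by
    rw [_root_.smul_pow, hζ.pow_eq_one, one_smul, h.pow_eq])
  let σ : L ≃ₐ[K] L := .ofBijective φ φ.bijective
  have hσ (i : ℕ) : (σ ^ i) α = ζ ^ i • α := by
    induction i with
    | zero => simp
    | succ i ih => rw [pow_succ', AlgEquiv.mul_apply, ih, map_smul, pow_succ, mul_smul]; congr
  have hbij : Function.Bijective fun i : Fin n ↦ σ ^ (i : ℕ) := by
    rw [Fintype.bijective_iff_injective_and_card, Fintype.card_fin, ← Nat.card_eq_fintype_card,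
      IsGalois.card_aut_eq_finrank, h.finrank_eq]
    refine ⟨fun i j hij ↦ Fin.ext (hζ.pow_inj i.2 j.2 ?_), rfl⟩
    refine smul_left_injective K (h.ne_zero ha) ?_
    simpa only [← hσ] using DFunLike.congr_fun hij α
  refine ⟨σ, hφ, fun x ↦ ?_⟩
  rw [Algebra.norm_eq_prod_automorphisms, ← Fin.prod_univ_eq_prod_range (fun i ↦ (σ ^ i) x)]
  exact (hbij.prod_comp fun τ ↦ τ x).symm

theorem pow_eq_one_of_isPrimitiveRoot (h : IsKummerGenerator K n a α) (hζ : IsPrimitiveRoot ζ n)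
    (σ : L ≃ₐ[K] L) : σ ^ n = 1 := by
  have := h.finiteDimensional
  have := (h.isGalois_and_isCyclic hζ).1
  rw [← h.finrank_eq, ← IsGalois.card_aut_eq_finrank, pow_card_eq_one']

theorem semiconjBy_of_generator (h : IsKummerGenerator K n b β) {S : Type*} [Ring S] [Algebra K S]
    {φ ψ : M →ₐ[K] S} {s : S} (hs : SemiconjBy s (φ β) (ψ β)) (m : M) :
    SemiconjBy s (φ m) (ψ m) := by
  have hm : m ∈ Algebra.adjoin K {β} := h.algebra_adjoin_eq_top ▸ Algebra.mem_top
  induction hm using Algebra.adjoin_induction with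
  | mem y hy => rwa [Set.mem_singleton_iff.mp hy]
  | algebraMap r =>
    rw [AlgHom.commutes, AlgHom.commutes]
    exact (Algebra.commutes r s).symm
  | add y z _ _ hy hz => simpa only [map_add] using hy.add_right hz
  | mul y z _ _ hy hz => simpa only [map_mul] using hy.mul_right hz

/- `β` acts on `L` as `y ↦ x * σ y`, whose `n`-th power is multiplication by `N x = b`. -/
theorem exists_algHom_end_of_norm_eq (hα : IsKummerGenerator K n a α)
    (hβ : IsKummerGenerator K n b β) (ha : a ≠ 0) (hζ : IsPrimitiveRoot ζ n)
    {τ : M ≃ₐ[K] M} (hτ : τ β = ζ⁻¹ • β) {x : L} (hx : Algebra.norm K x = b) :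
    ∃ φ : M →ₐ[K] Module.End K L, ∀ m y, α * φ m y = φ (τ m) (α * y) := by
  obtain ⟨σ, hσ, hσN⟩ := hα.exists_algEquiv ha hζ
  obtain ⟨φ, hφ⟩ := hβ.exists_algHom (s := LinearMap.mulLeft K x ∘ₗ σ.toLinearMap) (by
    ext y
    rw [mulLeft_comp_algEquiv_pow_apply, ← hσN, hx, hα.pow_eq_one_of_isPrimitiveRoot hζ,
      AlgEquiv.one_apply, Module.algebraMap_end_apply, Algebra.smul_def])
  have hsemi : SemiconjBy (LinearMap.mulLeft K α) (φ β) ((φ.comp τ.toAlgHom) β) := by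
    ext y
    have hζ0 : ζ ≠ 0 := hζ.ne_zero (NeZero.ne n)
    simp only [hφ, Module.End.mul_apply, LinearMap.comp_apply, AlgEquiv.toLinearMap_apply,
      LinearMap.mulLeft_apply, AlgHom.comp_apply, AlgEquiv.toAlgHom_apply, hτ, map_smul,
      Algebra.smul_mul_assoc, LinearMap.smul_apply, map_mul, hσ, inv_smul_smul₀ hζ0]
    ring
  exact ⟨φ, fun m y ↦ LinearMap.congr_fun (hβ.semiconjBy_of_generator hsemi m) y⟩

/- Through `φ`, `L` is a one-dimensional `M`-vector space spanned by `1`, on which multiplication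
by `α` is `τ`-semilinear; so if `α = φ m 1`, then `a = α ^ n = N m`. -/
theorem exists_norm_eq_of_norm_eq (hα : IsKummerGenerator K n a α)
    (hβ : IsKummerGenerator K n b β) (ha : a ≠ 0) (hb : b ≠ 0) (hζ : IsPrimitiveRoot ζ n)
    {x : L} (hx : Algebra.norm K x = b) : ∃ m : M, Algebra.norm K m = a := by
  have := hα.finiteDimensional
  have := hβ.finiteDimensional
  obtain ⟨τ, hτ, hτN⟩ := hβ.exists_algEquiv hb hζ.inv
  obtain ⟨φ, hφ⟩ := hα.exists_algHom_end_of_norm_eq hβ ha hζ hτ hx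
  let ψ : M →ₗ[K] L := LinearMap.applyₗ (1 : L) ∘ₗ φ.toLinearMap
  have hψ (m : M) : ψ m = φ m 1 := rfl
  have hψ_inj : Function.Injective ψ := by
    refine (injective_iff_map_eq_zero ψ).mpr fun m hm ↦ by_contra fun hm0 ↦ one_ne_zero (α := L) ?_
    calc (1 : L) = φ (m⁻¹ * m) 1 := by simp [hm0]
      _ = φ m⁻¹ (ψ m) := by rw [map_mul, Module.End.mul_apply, hψ]
      _ = 0 := by rw [hm, map_zero]
  have hψ_surj : Function.Surjective ψ :=
    (LinearMap.injective_iff_surjective_of_finrank_eq_finrank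
      (hβ.finrank_eq.trans hα.finrank_eq.symm)).mp hψ_inj
  obtain ⟨m, hm⟩ := hψ_surj α
  have hpow (i : ℕ) : α ^ i = ψ (∏ j ∈ Finset.range i, (τ ^ j) m) := by
    induction i with
    | zero => simp [hψ]
    | succ i ih =>
      rw [pow_succ', ih, hψ, hφ, mul_one, ← hm, hψ, ← Module.End.mul_apply, ← map_mul,
        Finset.prod_range_succ', map_prod]
      simp only [hψ, pow_succ', AlgEquiv.mul_apply, pow_zero, AlgEquiv.one_apply]
  refine ⟨m, (algebraMap K M).injective (hψ_inj ?_)⟩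
  rw [hτN, ← hpow, hα.pow_eq, hψ, AlgHom.commutes, Module.algebraMap_end_apply,
    Algebra.algebraMap_eq_smul_one]

end IsKummerGenerator

/-! ### Kummer polynomials with Artin-Schreier reduction -/

theorem exists_one_add_pow_prime_eq {R : Type*} [CommSemiring R] {p : ℕ} (hp : p.Prime) (y : R) :
    ∃ q : R, (1 + y) ^ p = 1 + p * y + y ^ p + p * y ^ 2 * q := by
  obtain ⟨n, rfl⟩ : ∃ n, p = n + 2 := ⟨p - 2, by have := hp.two_le; omega⟩
  have hdvd (k : ℕ) : ∃ c : ℕ, k < n → (n + 2).choose (k + 2) = (n + 2) * c := by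
    by_cases hk : k < n
    · exact (hp.dvd_choose_self (k := k + 2) (by omega) (by omega)).imp fun c hc _ ↦ hc
    · exact ⟨0, fun h ↦ (hk h).elim⟩
  choose c hc using hdvd
  refine ⟨∑ k ∈ Finset.range n, c k * y ^ k, ?_⟩
  have hsum : ∑ k ∈ Finset.range n, y ^ (k + 2) * ((n + 2).choose (k + 2) : R) =
      (n + 2 : ℕ) * y ^ 2 * ∑ k ∈ Finset.range n, c k * y ^ k := by
    rw [Finset.mul_sum]
    refine Finset.sum_congr rfl fun k hk ↦ ?_
    rw [hc k (Finset.mem_range.mp hk)]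
    push_cast
    ring
  rw [add_comm 1 y, add_pow, Finset.sum_range_succ, Finset.sum_range_succ', Finset.sum_range_succ']
  simp only [one_pow, mul_one, hsum, zero_add, pow_zero, pow_one, Nat.choose_zero_right,
    Nat.choose_one_right, Nat.choose_self, Nat.cast_one]
  ring

theorem monic_of_C_pow_mul_eq {R : Type*} [CommRing R] [IsDomain R] {r s : R} {n : ℕ} {F : R[X]}
    (hr : r ≠ 0) (hn : n ≠ 0) (hF : C (r ^ n) * F = (1 + C r * X) ^ n - C s) : F.Monic := by
  have hdeg : (C r * X + 1).natDegree = 1 := natDegree_linear (b := 1) hr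
  have hlead : (C r * X + 1).leadingCoeff = r := leadingCoeff_linear (b := 1) hr
  have hlt : degree (C s) < degree ((C r * X + 1) ^ n) := by
    refine degree_C_le.trans_lt (natDegree_pos_iff_degree_pos.mp ?_)
    rwa [natDegree_pow, hdeg, mul_one, Nat.pos_iff_ne_zero]
  refine mul_left_cancel₀ (pow_ne_zero n hr) ?_
  calc r ^ n * F.leadingCoeff = (C (r ^ n) * F).leadingCoeff := by
        rw [leadingCoeff_mul, leadingCoeff_C]
    _ = r ^ n * 1 := by
        rw [hF, add_comm 1, leadingCoeff_sub_of_degree_lt hlt, leadingCoeff_pow, hlead, mul_one]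

section LocalDomain

variable {R : Type*} [CommRing R] [IsLocalRing R] {p : ℕ} [Fact p.Prime]
  [CharP (ResidueField R) p] {ζ : R}

theorem residue_sub_one_eq_zero (hζ : IsPrimitiveRoot ζ p) : residue R (ζ - 1) = 0 := by
  have hpow : residue R (ζ - 1) ^ p = 0 := by
    rw [map_sub, sub_pow_char, ← map_pow, hζ.pow_eq_one, map_one, one_pow, sub_self]
  exact pow_eq_zero_iff (NeZero.ne p) |>.mp hpow

theorem isUnit_one_add_sub_one_pow_mul (hζ : IsPrimitiveRoot ζ p) (t : R) :
    IsUnit (1 + (ζ - 1) ^ p * t) := by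
  rw [← residue_ne_zero_iff_isUnit, map_add, map_mul, map_pow, residue_sub_one_eq_zero hζ,
    zero_pow (NeZero.ne p), zero_mul, add_zero, map_one]
  exact one_ne_zero

variable [IsDomain R]

theorem exists_natCast_eq_mul_sub_one_pow (hζ : IsPrimitiveRoot ζ p) :
    ∃ w : R, residue R w = -1 ∧ (p : R) = w * (ζ - 1) ^ (p - 1) := by
  have hp : p.Prime := Fact.out
  obtain ⟨q, hq⟩ := exists_one_add_pow_prime_eq hp (ζ - 1)
  have hrel : (ζ - 1) * ((ζ - 1) ^ (p - 1) + p * (1 + (ζ - 1) * q)) = 0 := by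
    rw [mul_add, ← pow_succ', Nat.sub_add_cancel hp.one_le]
    rw [add_sub_cancel, hζ.pow_eq_one] at hq
    linear_combination -hq
  have hmul : (p : R) * (1 + (ζ - 1) * q) = -(ζ - 1) ^ (p - 1) :=
    eq_neg_of_add_eq_zero_right
      ((mul_eq_zero.mp hrel).resolve_left (sub_ne_zero.mpr (hζ.ne_one hp.one_lt)))
  have hres : residue R (1 + (ζ - 1) * q) = 1 := by
    rw [map_add, map_mul, residue_sub_one_eq_zero hζ, zero_mul, map_one, add_zero]
  obtain ⟨u, hu⟩ : IsUnit (1 + (ζ - 1) * q) := by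
    rw [← residue_ne_zero_iff_isUnit, hres]
    exact one_ne_zero
  refine ⟨-↑u⁻¹, ?_, ?_⟩
  · have hinv : residue R u * residue R ↑u⁻¹ = 1 := by rw [← map_mul, Units.mul_inv, map_one]
    rw [hu, hres, one_mul] at hinv
    rw [map_neg, hinv]
  · rw [neg_mul_comm, ← hmul, ← hu, mul_comm, Units.mul_inv_cancel_right]

theorem exists_monic_map_residue_eq_artinSchreier (hζ : IsPrimitiveRoot ζ p) (t : R) :
    ∃ F : R[X], F.Monic ∧ F.map (residue R) = X ^ p - X - C (residue R t) ∧
      C ((ζ - 1) ^ p) * F = (1 + C (ζ - 1) * X) ^ p - C (1 + (ζ - 1) ^ p * t) := by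
  have hp : p.Prime := Fact.out
  obtain ⟨w, hw, hpw⟩ := exists_natCast_eq_mul_sub_one_pow hζ
  obtain ⟨Q, hQ⟩ := exists_one_add_pow_prime_eq hp (C (ζ - 1) * X)
  have hpC : (p : R[X]) * C (ζ - 1) = C w * C ((ζ - 1) ^ p) := by
    rw [← C_eq_natCast, hpw, ← C_mul, mul_assoc, ← pow_succ, Nat.sub_add_cancel hp.one_le, C_mul]
  have hF : C ((ζ - 1) ^ p) * (X ^ p + C w * X * (1 + C (ζ - 1) * X * Q) - C t) =
      (1 + C (ζ - 1) * X) ^ p - C (1 + (ζ - 1) ^ p * t) := by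
    rw [hQ, mul_pow, C_add, C_mul (a := (ζ - 1) ^ p), C_1, C_pow]
    rw [C_pow] at hpC
    linear_combination (-X - C (ζ - 1) * X ^ 2 * Q) * hpC
  refine ⟨_, monic_of_C_pow_mul_eq (sub_ne_zero.mpr (hζ.ne_one hp.one_lt)) hp.ne_zero hF, ?_, hF⟩
  simp only [Polynomial.map_sub, Polynomial.map_add, Polynomial.map_mul, Polynomial.map_pow,
    map_X, map_C, Polynomial.map_one, hw, residue_sub_one_eq_zero hζ, C_0, C_neg, C_1]
  ring

end LocalDomain

theorem exists_pow_eq_one_add_of_henselian {R : Type*} [CommRing R] [IsDomain R]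
    [HenselianLocalRing R] {p : ℕ} [Fact p.Prime] [CharP (ResidueField R) p] {ζ t : R}
    (hζ : IsPrimitiveRoot ζ p) (ht : t ∈ maximalIdeal R) :
    ∃ y : R, y ^ p = 1 + (ζ - 1) ^ p * t := by
  have hp : p.Prime := Fact.out
  obtain ⟨F, hmonic, hmap, hF⟩ := exists_monic_map_residue_eq_artinSchreier hζ t
  rw [(residue_eq_zero_iff t).mpr ht, C_0, sub_zero] at hmap
  have heval : F.eval 0 ∈ maximalIdeal R := by
    rw [← residue_eq_zero_iff, ← eval₂_hom, ← eval_map, hmap]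
    simp [hp.ne_zero]
  have hderiv : IsUnit (F.derivative.eval 0) := by
    rw [← residue_ne_zero_iff_isUnit, ← eval₂_hom, ← eval_map, ← derivative_map, hmap]
    simp [derivative_X_pow]
  obtain ⟨x, hx, -⟩ := HenselianLocalRing.is_henselian F hmonic 0 heval hderiv
  refine ⟨1 + (ζ - 1) * x, sub_eq_zero.mp ?_⟩
  simpa [hx.eq_zero] using (congrArg (eval x) hF).symm

/-! ### Norms from unramified extensions -/

theorem natDegree_X_pow_sub_X_sub_C {k : Type*} [Field k] {n : ℕ} (hn : 1 < n) (c : k) :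
    (X ^ n - X - C c : k[X]).natDegree = n := by
  rw [natDegree_sub_C, FiniteField.X_pow_card_sub_X_natDegree_eq k hn]

section ArtinSchreier

variable {k : Type*} [Field k] {p : ℕ} [Fact p.Prime] [CharP k p] {c : k}

/- The additive map `y ↦ y ^ p - y` sends the sum of the roots of `g` to `g.natDegree • c`. -/
theorem exists_pow_sub_eq_of_monic_dvd {g : k[X]} (hg : g.Monic) (hdvd : g ∣ X ^ p - X - C c)
    (hpos : 0 < g.natDegree) (hlt : g.natDegree < p) : ∃ y : k, y ^ p - y = c := by
  let Ω := AlgebraicClosure k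
  have : CharP Ω p := charP_of_injective_algebraMap (algebraMap k Ω).injective p
  let φ : Ω →+ Ω := (frobenius Ω p : Ω →+ Ω) - AddMonoidHom.id Ω
  have hφ (x : Ω) : φ x = x ^ p - x := rfl
  have hsplits : (g.map (algebraMap k Ω)).Splits := IsAlgClosed.splits _
  have hroot : ∀ x ∈ (g.map (algebraMap k Ω)).roots, φ x = algebraMap k Ω c := fun x hx ↦ by
    obtain ⟨h, hh⟩ := hdvd
    have := congrArg (aeval x) hh
    rw [map_mul, (mem_aroots.mp hx).2, zero_mul] at this
    simpa [hφ, sub_eq_zero] using this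
  have hsum : (-g.nextCoeff) ^ p - -g.nextCoeff = g.natDegree * c := by
    apply (algebraMap k Ω).injective
    rw [map_sub, map_pow, ← hφ, map_neg, ← nextCoeff_map (algebraMap k Ω).injective,
      hsplits.nextCoeff_eq_neg_sum_roots_of_monic (hg.map _), neg_neg, map_multiset_sum,
      Multiset.map_congr rfl hroot, Multiset.map_const', Multiset.sum_replicate,
      ← hsplits.natDegree_eq_card_roots, natDegree_map, nsmul_eq_mul, map_mul, map_natCast]
  have hdeg : (g.natDegree : k) ≠ 0 := by
    rw [Ne, CharP.cast_eq_zero_iff k p]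
    exact Nat.not_dvd_of_pos_of_lt hpos hlt
  have hfrob : (g.natDegree : k) ^ p = g.natDegree := by
    rw [← frobenius_def, map_natCast]
  refine ⟨-g.nextCoeff / g.natDegree, ?_⟩
  rw [div_pow, hfrob, ← sub_div, hsum, mul_div_cancel_left₀ c hdeg]

theorem irreducible_X_pow_sub_X_sub_C (hc : ∀ y : k, y ^ p - y ≠ c) :
    Irreducible (X ^ p - X - C c : k[X]) := by
  have hp : p.Prime := Fact.out
  have hdeg : (X ^ p - X - C c : k[X]).natDegree = p :=
    natDegree_X_pow_sub_X_sub_C hp.one_lt c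
  have hmonic : (X ^ p - X - C c : k[X]).Monic := by
    rw [sub_sub]
    refine monic_X_pow_sub ?_
    rw [degree_X_add_C]
    exact_mod_cast hp.one_lt
  refine hmonic.irreducible_iff_natDegree'.mpr ⟨fun h ↦ ?_, fun f g _ hg hfg hmem ↦ ?_⟩
  · rw [h, natDegree_one] at hdeg
    exact hp.ne_zero hdeg.symm
  · rw [hdeg, Finset.mem_Ioc] at hmem
    have hlt : g.natDegree < p := hmem.2.trans_lt (Nat.div_lt_self hp.pos one_lt_two)
    obtain ⟨y, hy⟩ := exists_pow_sub_eq_of_monic_dvd hg ⟨f, by rw [← hfg, mul_comm]⟩ hmem.1 hlt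
    exact hc y hy

end ArtinSchreier

theorem isCoprime_of_isCoprime_map_residue {R : Type*} [CommRing R] [IsLocalRing R] {f g : R[X]}
    (hf : f.Monic) (h : IsCoprime (f.map (residue R)) (g.map (residue R))) : IsCoprime f g := by
  rw [← isUnit_resultant_iff_isCoprime (hf.map _)] at h
  rw [← isUnit_resultant_iff_isCoprime hf, ← residue_ne_zero_iff_isUnit, ← resultant_map_map]
  obtain ⟨d, hd⟩ := Nat.exists_eq_add_of_le (natDegree_map_le (f := residue R) (p := g))
  rw [hd, resultant_add_right_deg _ _ _ _ _ le_rfl, ← hf.natDegree_map (residue R)]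
  simpa [(hf.map (residue R)).coeff_natDegree] using h.ne_zero

section Valuation

variable {K Γ : Type*} [Field K] [LinearOrderedCommGroupWithZero Γ] (v : Valuation K Γ)

theorem exists_eq_C_mul_map_integer {g : K[X]} (hg : g ≠ 0) :
    ∃ (a : K) (f : v.integer[X]), a ≠ 0 ∧ g = C a * f.map (algebraMap v.integer K) ∧
      f.map (residue v.integer) ≠ 0 := by
  obtain ⟨i, hi, hmax⟩ := g.support.exists_max_image (fun i ↦ v (g.coeff i)) (by simpa using hg)
  have hi0 : g.coeff i ≠ 0 := mem_support_iff.mp hi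
  have hle (j : ℕ) : v ((g.coeff i)⁻¹ * g.coeff j) ≤ 1 := by
    by_cases hj : j ∈ g.support
    · rw [map_mul, map_inv₀, inv_mul_le_one₀ (v.pos_iff.mpr hi0)]
      exact hmax j hj
    · simp [notMem_support_iff.mp hj]
  obtain ⟨f, hf⟩ : ∃ f : v.integer[X], f.map (algebraMap v.integer K) = C (g.coeff i)⁻¹ * g := by
    refine (lifts_iff_coeff_lifts _).mpr fun j ↦ ?_
    rw [coeff_C_mul]
    exact ⟨⟨_, hle j⟩, rfl⟩
  refine ⟨g.coeff i, f, hi0, ?_, fun h ↦ one_ne_zero (α := ResidueField v.integer) ?_⟩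
  · rw [hf, ← mul_assoc, ← C_mul, mul_inv_cancel₀ hi0, C_1, one_mul]
  · have hone : f.coeff i = 1 := by
      apply FaithfulSMul.algebraMap_injective v.integer K
      rw [← coeff_map, hf, coeff_C_mul, inv_mul_cancel₀ hi0, map_one]
    rw [← map_one (residue v.integer), ← hone, ← coeff_map, h, coeff_zero]

variable {v} {M : Type*} [Field M] [Algebra K M] {F : v.integer[X]} {y : M}

theorem valuation_norm_le_one {x : M} (hx : IsIntegral v.integer x) :
    v (Algebra.norm K x) ≤ 1 := by
  obtain ⟨r, hr⟩ := IsIntegrallyClosed.isIntegral_iff.mp (Algebra.isIntegral_norm K hx)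
  rw [← hr]
  exact r.2

theorem valuation_norm_aeval_eq_one (hF : F.Monic) (hy : aeval y F = 0) {f : v.integer[X]}
    (hcop : IsCoprime F f) : v (Algebra.norm K (aeval y f)) = 1 := by
  have hyint : IsIntegral v.integer y := ⟨F, hF, by rwa [← aeval_def]⟩
  have hle (g : v.integer[X]) : v (Algebra.norm K (aeval y g)) ≤ 1 :=
    valuation_norm_le_one (adjoin_le_integralClosure hyint (aeval_mem_adjoin_singleton _ y))
  obtain ⟨b, g, hbg⟩ := hcop
  have hinv : aeval y g * aeval y f = 1 := by
    have := congrArg (aeval y) hbg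
    rwa [map_add, map_mul, hy, mul_zero, zero_add, map_mul, map_one] at this
  have hmul : v (Algebra.norm K (aeval y g)) * v (Algebra.norm K (aeval y f)) = 1 := by
    rw [← map_mul, ← map_mul, hinv, map_one, map_one]
  refine (hle f).antisymm ?_
  rw [← hmul]
  exact mul_le_of_le_one_left zero_le (hle g)

theorem exists_valuation_norm_eq_pow_finrank (hF : F.Monic)
    (hirr : Irreducible (F.map (residue v.integer))) (hy : aeval y F = 0)
    (htop : Algebra.adjoin K {y} = ⊤) {m : M} (hm : m ≠ 0) :
    ∃ a : K, a ≠ 0 ∧ v (Algebra.norm K m) = v a ^ Module.finrank K M := by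
  obtain ⟨g, rfl⟩ : ∃ g : K[X], aeval y g = m := by
    rw [← AlgHom.mem_range, ← Algebra.adjoin_singleton_eq_range_aeval, htop]
    exact Algebra.mem_top
  let r : K[X] := g %ₘ F.map (algebraMap v.integer K)
  have hr : aeval y r = aeval y g :=
    aeval_modByMonic_eq_self_of_root (by rwa [aeval_map_algebraMap])
  have hr0 : r ≠ 0 := by
    intro h
    rw [h, map_zero] at hr
    exact hm hr.symm
  obtain ⟨a, f, ha, hrf, hf⟩ := exists_eq_C_mul_map_integer v hr0
  have hdeg : (f.map (residue v.integer)).degree < (F.map (residue v.integer)).degree := by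
    have hfr : r.degree = f.degree := by
      rw [hrf, degree_C_mul ha,
        degree_map_eq_of_injective (FaithfulSMul.algebraMap_injective v.integer K)]
    have hrF : r.degree < F.degree :=
      (degree_modByMonic_lt _ (hF.map _)).trans_le degree_map_le
    rw [hF.degree_map]
    exact degree_map_le.trans_lt (hfr ▸ hrF)
  have hcop : IsCoprime F f := isCoprime_of_isCoprime_map_residue hF
    (hirr.coprime_iff_not_dvd.mpr (not_dvd_of_degree_lt hf hdeg))
  refine ⟨a, ha, ?_⟩
  rw [← hr, hrf, map_mul, aeval_C, aeval_map_algebraMap, map_mul, Algebra.norm_algebraMap, map_mul,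
    map_pow, valuation_norm_aeval_eq_one hF hy hcop, mul_one]

end Valuation

theorem intermediateField_adjoin_one_add_smul_eq_top {K M : Type*} [Field K] [Field M] [Algebra K M]
    {y : M} (hy : Algebra.adjoin K {y} = ⊤) {c : K} (hc : c ≠ 0) :
    IntermediateField.adjoin K {1 + c • y} = ⊤ := by
  have hmem : 1 + c • y ∈ IntermediateField.adjoin K {1 + c • y} :=
    IntermediateField.mem_adjoin_simple_self K _
  have hy_mem : y ∈ IntermediateField.adjoin K {1 + c • y} := by
    have := IntermediateField.smul_mem _ (sub_mem hmem (one_mem _)) (x := c⁻¹)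
    rwa [add_sub_cancel_left, inv_smul_smul₀ hc] at this
  refine top_le_iff.mp fun x _ ↦ ?_
  have hx : x ∈ Algebra.adjoin K {y} := hy ▸ Algebra.mem_top
  exact Algebra.adjoin_le (Set.singleton_subset_iff.mpr hy_mem) hx

theorem exists_isKummerGenerator_forall_valuation_norm_eq_pow.{u} {K : Type u} {Γ : Type*}
    [Field K] [LinearOrderedCommGroupWithZero Γ] {v : Valuation K Γ} {p : ℕ} [Fact p.Prime]
    [CharP (ResidueField v.integer) p] {ζ t : v.integer} (hζ : IsPrimitiveRoot ζ p)
    (ht : ∀ y : ResidueField v.integer, y ^ p - y ≠ residue v.integer t) :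
    ∃ (M : Type u) (_ : Field M) (_ : Algebra K M) (η : M),
      IsKummerGenerator K p ((1 + (ζ - 1) ^ p * t : v.integer) : K) η ∧
      ∀ m : M, m ≠ 0 → ∃ a : K, a ≠ 0 ∧ v (Algebra.norm K m) = v a ^ p := by
  have hp : p.Prime := Fact.out
  obtain ⟨F, hmonic, hmap, hF⟩ := exists_monic_map_residue_eq_artinSchreier hζ t
  have hirr : Irreducible (F.map (residue v.integer)) := hmap ▸ irreducible_X_pow_sub_X_sub_C ht
  let FK : K[X] := F.map (algebraMap v.integer K)
  have : Fact (Irreducible FK) := ⟨(hmonic.irreducible_iff_irreducible_map_fraction_map).mp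
    (hmonic.irreducible_of_irreducible_map (residue v.integer) F hirr)⟩
  let y : AdjoinRoot FK := AdjoinRoot.root FK
  have hy : aeval y F = 0 := by
    rw [← aeval_map_algebraMap K]
    exact AdjoinRoot.eval₂_root FK
  have hytop : Algebra.adjoin K {y} = ⊤ := AdjoinRoot.adjoinRoot_eq_top
  have hfinrank : Module.finrank K (AdjoinRoot FK) = p := by
    rw [(AdjoinRoot.powerBasis (hmonic.map _).ne_zero).finrank, AdjoinRoot.powerBasis_dim,
      hmonic.natDegree_map, ← hmonic.natDegree_map (residue v.integer), hmap,
      natDegree_X_pow_sub_X_sub_C hp.one_lt]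
  have hη : (1 + ((ζ - 1 : v.integer) : K) • y) ^ p =
      algebraMap K (AdjoinRoot FK) ((1 + (ζ - 1) ^ p * t : v.integer) : K) := by
    have heval := congrArg (aeval y) hF
    rw [map_mul, hy, mul_zero] at heval
    refine sub_eq_zero.mp (Eq.trans ?_ heval.symm)
    rw [map_sub, map_pow, map_add, map_one, map_mul, aeval_C, aeval_C, aeval_X, Algebra.smul_def]
    rfl
  refine ⟨AdjoinRoot FK, inferInstance, inferInstance, _, ⟨hη, ?_, hfinrank⟩, fun m hm ↦ ?_⟩
  · refine intermediateField_adjoin_one_add_smul_eq_top hytop fun h ↦ hζ.ne_one hp.one_lt ?_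
    exact sub_eq_zero.mp (Subtype.ext h)
  · rw [← hfinrank]
    exact exists_valuation_norm_eq_pow_finrank hmonic hirr hy hytop hm

/-! ### The conductor of a Kummer extension -/

namespace IsNormalizedVal

variable {p : ℕ} {K : Type*} [Field K] {v : K → ℤ} (h : IsNormalizedVal p K v) {ζ u : K}

theorem charP_residueField [Fact p.Prime] : CharP (ResidueField h.valuation.integer) p := by
  refine (CharP.charP_iff_prime_eq_zero Fact.out).mpr ?_
  rw [← map_natCast (residue h.valuation.integer), residue_eq_zero_iff, mem_maximalIdeal,
    mem_nonunits_iff, Valuation.Integer.not_isUnit_iff_valuation_lt_one]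
  by_cases hp : (p : K) = 0
  · simp [hp]
  · exact (h.valuation_lt_one_iff hp).mpr h.2.2.2

theorem exists_integer_isPrimitiveRoot [NeZero p] (hζ : IsPrimitiveRoot ζ p) :
    ∃ ξ : h.valuation.integer, (ξ : K) = ζ ∧ IsPrimitiveRoot ξ p := by
  have hle : h.valuation ζ ≤ 1 := by
    rw [← pow_le_one_iff (NeZero.ne p), ← _root_.map_pow, hζ.pow_eq_one, _root_.map_one]
  exact ⟨⟨ζ, hle⟩, rfl,
    hζ.of_map_of_injective (f := h.valuation.integer.subtype) Subtype.val_injective⟩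

theorem sub_one_mul_map_sub_one (h : IsNormalizedVal p K v) [Fact p.Prime]
    (hζ : IsPrimitiveRoot ζ p) : ((p : ℤ) - 1) * v (ζ - 1) = v p := by
  have hp : p.Prime := Fact.out
  have := h.charP_residueField
  obtain ⟨ξ, rfl, hξ⟩ := h.exists_integer_isPrimitiveRoot hζ
  obtain ⟨w, hw, hpw⟩ := exists_natCast_eq_mul_sub_one_pow hξ
  have hwunit : IsUnit w := by
    rw [← residue_ne_zero_iff_isUnit, hw]
    exact neg_ne_zero.mpr one_ne_zero
  have hw0 : (w : K) ≠ 0 := mod_cast hwunit.ne_zero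
  have hsub : (ξ - 1 : K) ≠ 0 := sub_ne_zero.mpr (hζ.ne_one hp.one_lt)
  have hpK : (p : K) = w * (ξ - 1) ^ (p - 1) := congrArg Subtype.val hpw
  rw [hpK, h.1 _ _ hw0 (pow_ne_zero _ hsub), h.map_eq_zero_of_isUnit hwunit, h.map_pow hsub,
    zero_add, Nat.cast_sub hp.one_le, Nat.cast_one]

theorem map_sub_one_pos (h : IsNormalizedVal p K v) [Fact p.Prime] (hζ : IsPrimitiveRoot ζ p) :
    0 < v (ζ - 1) := by
  have hp : (1 : ℤ) < p := mod_cast (Fact.out : p.Prime).one_lt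
  refine pos_of_mul_pos_right ?_ (sub_nonneg.mpr hp.le)
  rw [h.sub_one_mul_map_sub_one hζ]
  exact h.2.2.2

theorem exists_pow_eq_of_lt_map_sub_one [Fact p.Prime] [HenselianLocalRing h.valuation.integer]
    (hζ : IsPrimitiveRoot ζ p) (hu : u = 1 ∨ p * v (ζ - 1) < v (u - 1)) : ∃ y : K, y ^ p = u := by
  obtain rfl | hu1 := eq_or_ne u 1
  · exact ⟨1, one_pow p⟩
  replace hu := hu.resolve_left hu1
  have := h.charP_residueField
  obtain ⟨ξ, rfl, hξ⟩ := h.exists_integer_isPrimitiveRoot hζ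
  have hsub : (ξ - 1 : K) ^ p ≠ 0 :=
    pow_ne_zero p (sub_ne_zero.mpr (hζ.ne_one (Fact.out : p.Prime).one_lt))
  obtain ⟨t, ht⟩ : ∃ t : K, u - 1 = (ξ - 1) ^ p * t := ⟨_, (mul_div_cancel₀ _ hsub).symm⟩
  have ht0 : t ≠ 0 := right_ne_zero_of_mul (ht ▸ sub_ne_zero.mpr hu1)
  have hvt : h.valuation t < 1 := by
    rw [ht, h.1 _ _ hsub ht0, h.map_pow (ne_zero_pow (NeZero.ne p) hsub)] at hu
    exact (h.valuation_lt_one_iff ht0).mpr (by linarith)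
  obtain ⟨y, hy⟩ := exists_pow_eq_one_add_of_henselian (t := ⟨t, hvt.le⟩) hξ
    (Valuation.Integer.not_isUnit_iff_valuation_lt_one.mpr hvt)
  refine ⟨y, ?_⟩
  calc (y : K) ^ p = 1 + (ξ - 1) ^ p * t := congrArg Subtype.val hy
    _ = u := by rw [← ht, add_sub_cancel]

end IsNormalizedVal

section Conductor

variable {K : Type*} [Field K] {v : K → ℤ} {L : Type*} [Field L] [Algebra K L] {n : ℕ}

theorem condExp_le_succ
    (hnorm : ∀ u : K, u ≠ 0 → u = 1 ∨ n < v (u - 1) → ∃ x : L, x ≠ 0 ∧ Algebra.norm K x = u) :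
    condExp v L ≤ n + 1 :=
  Nat.sInf_le fun u hu0 _ hu ↦ hnorm u hu0 (hu.resolve_left n.succ_ne_zero)

theorem condExp_eq_succ
    (hnorm : ∀ u : K, u ≠ 0 → u = 1 ∨ n < v (u - 1) → ∃ x : L, x ≠ 0 ∧ Algebra.norm K x = u)
    {u : K} (hu0 : u ≠ 0) (hu : v u = 0) (hun : n ≤ v (u - 1))
    (hnot : ∀ x : L, Algebra.norm K x ≠ u) : condExp v L = n + 1 := by
  refine (condExp_le_succ hnorm).antisymm (Nat.lt_iff_add_one_le.mp (not_le.mp fun hle ↦ ?_))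
  have hmem : condExp v L ∈ _ := Nat.sInf_mem ⟨n + 1, fun u hu0 _ hu ↦
    hnorm u hu0 (hu.resolve_left n.succ_ne_zero)⟩
  obtain ⟨x, -, hx⟩ := hmem u hu0 hu (.inr (.inr ((Nat.cast_le.mpr hle).trans hun)))
  exact hnot x hx

end Conductor

namespace IsNormalizedVal

variable {p : ℕ} [Fact p.Prime] {K : Type*} [Field K] {v : K → ℤ} (h : IsNormalizedVal p K v)
  {ζ : K}

theorem exists_norm_eq_of_lt_map_sub_one [HenselianLocalRing h.valuation.integer]
    (hζ : IsPrimitiveRoot ζ p) {L : Type*} [Field L] [Algebra K L] (hL : Module.finrank K L = p)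
    {u : K} (hu0 : u ≠ 0) (hu : u = 1 ∨ p * v (ζ - 1) < v (u - 1)) :
    ∃ x : L, x ≠ 0 ∧ Algebra.norm K x = u := by
  have : FiniteDimensional K L := .of_finrank_pos (hL ▸ (Fact.out : p.Prime).pos)
  obtain ⟨y, rfl⟩ := h.exists_pow_eq_of_lt_map_sub_one hζ hu
  have hy0 : y ≠ 0 := ne_zero_pow (NeZero.ne p) hu0
  exact ⟨algebraMap K L y, by simpa using hy0, by rw [Algebra.norm_algebraMap, hL]⟩

theorem norm_ne_one_add {ξ t : h.valuation.integer} (hξ : IsPrimitiveRoot ξ p)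
    (ht : ∀ y : ResidueField h.valuation.integer, y ^ p - y ≠ residue h.valuation.integer t)
    {κ : K} (hκ0 : κ ≠ 0) (hκ : ¬ (p : ℤ) ∣ v κ) {L : Type*} [Field L] [Algebra K L] {θ : L}
    (hθ : IsKummerGenerator K p κ θ) (x : L) :
    Algebra.norm K x ≠ ((1 + (ξ - 1) ^ p * t : h.valuation.integer) : K) := by
  have := h.charP_residueField
  obtain ⟨M, _, _, η, hη, hnorm⟩ := exists_isKummerGenerator_forall_valuation_norm_eq_pow hξ ht
  have := hθ.finiteDimensional
  have := hη.finiteDimensional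
  have hu : ((1 + (ξ - 1) ^ p * t : h.valuation.integer) : K) ≠ 0 :=
    mod_cast (isUnit_one_add_sub_one_pow_mul hξ t).ne_zero
  have hξK : IsPrimitiveRoot (ξ : K) p :=
    hξ.map_of_injective (f := h.valuation.integer.subtype) Subtype.val_injective
  intro hx
  obtain ⟨m, rfl⟩ := hθ.exists_norm_eq_of_norm_eq hη hκ0 hu hξK hx
  obtain ⟨a, ha, hma⟩ := hnorm m (Algebra.norm_ne_zero_iff.mp hκ0)
  rw [← _root_.map_pow, h.valuation_inj hκ0 (pow_ne_zero p ha), h.map_pow ha] at hma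
  exact hκ ⟨v a, hma⟩

theorem exists_forall_norm_ne (hζ : IsPrimitiveRoot ζ p)
    (hres : ¬ Function.Surjective fun y : ResidueField h.valuation.integer ↦ y ^ p - y)
    {κ : K} (hκ0 : κ ≠ 0) (hκ : ¬ (p : ℤ) ∣ v κ) {L : Type*} [Field L] [Algebra K L] {θ : L}
    (hθ : IsKummerGenerator K p κ θ) :
    ∃ u : K, u ≠ 0 ∧ v u = 0 ∧ v (u - 1) = p * v (ζ - 1) ∧ ∀ x : L, Algebra.norm K x ≠ u := by
  have hp : p.Prime := Fact.out
  have := h.charP_residueField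
  obtain ⟨ξ, rfl, hξ⟩ := h.exists_integer_isPrimitiveRoot hζ
  obtain ⟨t, ht⟩ : ∃ t, ∀ y, y ^ p - y ≠ residue h.valuation.integer t := by
    rw [Function.Surjective, not_forall] at hres
    obtain ⟨c, hc⟩ := hres
    obtain ⟨t, rfl⟩ := residue_surjective c
    exact ⟨t, not_exists.mp hc⟩
  have htunit : IsUnit t := by
    rw [← residue_ne_zero_iff_isUnit]
    simpa [hp.ne_zero] using (ht 0).symm
  have hunit := isUnit_one_add_sub_one_pow_mul hξ t
  have hsub : (ξ - 1 : K) ≠ 0 := sub_ne_zero.mpr (hζ.ne_one hp.one_lt)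
  refine ⟨_, mod_cast hunit.ne_zero, h.map_eq_zero_of_isUnit hunit, ?_,
    h.norm_ne_one_add hξ ht hκ0 hκ hθ⟩
  calc v ((1 + (ξ - 1) ^ p * t : h.valuation.integer) - 1)
    _ = v ((ξ - 1) ^ p * t) := by push_cast; rw [add_sub_cancel_left]
    _ = p * v (ξ - 1) := by
      rw [h.1 _ _ (pow_ne_zero p hsub) (mod_cast htunit.ne_zero), h.map_pow hsub,
        h.map_eq_zero_of_isUnit htunit, add_zero]

theorem cast_condExp_le [HenselianLocalRing h.valuation.integer] (hζ : IsPrimitiveRoot ζ p)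
    {L : Type*} [Field L] [Algebra K L] (hL : Module.finrank K L = p) :
    (condExp v L : ℤ) ≤ p * v (ζ - 1) + 1 := by
  obtain ⟨s, hs⟩ := Int.eq_ofNat_of_zero_le (h.map_sub_one_pos hζ).le
  have := condExp_le_succ (v := v) (L := L) (n := p * s) fun u hu0 hu ↦
    h.exists_norm_eq_of_lt_map_sub_one hζ hL hu0 (by rwa [hs, ← Nat.cast_mul])
  rw [hs]
  exact_mod_cast this

theorem cast_condExp_eq [HenselianLocalRing h.valuation.integer] (hζ : IsPrimitiveRoot ζ p)
    (hres : ¬ Function.Surjective fun y : ResidueField h.valuation.integer ↦ y ^ p - y)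
    {κ : K} (hκ0 : κ ≠ 0) (hκ : ¬ (p : ℤ) ∣ v κ) {L : Type*} [Field L] [Algebra K L] {θ : L}
    (hθ : IsKummerGenerator K p κ θ) : (condExp v L : ℤ) = p * v (ζ - 1) + 1 := by
  obtain ⟨s, hs⟩ := Int.eq_ofNat_of_zero_le (h.map_sub_one_pos hζ).le
  obtain ⟨u, hu0, hu, hun, hnot⟩ := h.exists_forall_norm_ne hζ hres hκ0 hκ hθ
  have := condExp_eq_succ (v := v) (L := L) (n := p * s) (fun u hu0 hu ↦
    h.exists_norm_eq_of_lt_map_sub_one hζ hθ.finrank_eq hu0 (by rwa [hs, ← Nat.cast_mul]))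
    hu0 hu (by rw [hun, hs, Nat.cast_mul]) hnot
  rw [hs]
  exact_mod_cast this

end IsNormalizedVal

/-! ### Ramification of a Kummer extension -/

section Ramification

theorem valuation_sum_ne_zero {R Γ ι : Type*} [Ring R] [LinearOrderedCommGroupWithZero Γ]
    (v : Valuation R Γ) {s : Finset ι} (hs : s.Nonempty) {f : ι → R} (hf : ∀ i ∈ s, v (f i) ≠ 0)
    (hinj : Set.InjOn (fun i ↦ v (f i)) s) : v (∑ i ∈ s, f i) ≠ 0 := by
  classical
  obtain ⟨j, hj, hmax⟩ := s.exists_max_image (fun i ↦ v (f i)) hs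
  have hlt : ∀ i ∈ s \ {j}, v (f i) < v (f j) := fun i hi ↦ by
    obtain ⟨his, hij⟩ := Finset.mem_sdiff.mp hi
    exact (hmax i his).lt_of_ne fun h ↦ hij (Finset.mem_singleton.mpr (hinj his hj h))
  rw [v.map_sum_eq_of_lt hj hlt]
  exact hf j hj

theorem linearIndependent_of_valuation_smul_ne {K L Γ ι : Type*} [Field K] [Field L] [Algebra K L]
    [LinearOrderedCommGroupWithZero Γ] (v : Valuation L Γ) {b : ι → L} (hb : ∀ i, b i ≠ 0)
    (hne : ∀ (a c : K) (i j : ι), a ≠ 0 → c ≠ 0 → v (a • b i) = v (c • b j) → i = j) :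
    LinearIndependent K b := by
  classical
  refine linearIndependent_iff'.mpr fun s g hsum i hi ↦ by_contra fun hgi ↦ ?_
  have hmem {j : ι} (hj : j ∈ s.filter (g · ≠ 0)) : g j ≠ 0 := (Finset.mem_filter.mp hj).2
  refine valuation_sum_ne_zero v (s := s.filter (g · ≠ 0)) (f := fun j ↦ g j • b j)
    ⟨i, Finset.mem_filter.mpr ⟨hi, hgi⟩⟩ (fun j hj ↦ ?_) (fun j hj k hk hjk ↦ ?_) ?_
  · exact v.ne_zero_iff.mpr (smul_ne_zero (hmem hj) (hb j))
  · exact hne _ _ j k (hmem hj) (hmem hk) hjk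
  · rw [Finset.sum_filter_of_ne fun j _ h ↦ left_ne_zero_of_smul h, hsum, map_zero]

theorem IsNormalizedVal.ramification_le_finrank {p e : ℕ} {K L : Type*} [Field K] [Field L]
    [Algebra K L] [FiniteDimensional K L] {v : K → ℤ} {w : L → ℤ} (h : IsNormalizedVal p L w)
    (hext : ∀ x : K, x ≠ 0 → w (algebraMap K L x) = e * v x) : e ≤ Module.finrank K L := by
  obtain ⟨π, hπ0, hπ⟩ := h.2.2.1
  have hval (a : K) (ha : a ≠ 0) (i : ℕ) : w (a • π ^ i) = e * v a + i := by
    rw [Algebra.smul_def, h.1 _ _ ((_root_.map_ne_zero _).mpr ha) (pow_ne_zero i hπ0), hext a ha,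
      h.map_pow hπ0, hπ, mul_one]
  have hlin : LinearIndependent K fun i : Fin e ↦ π ^ (i : ℕ) := by
    refine linearIndependent_of_valuation_smul_ne h.valuation (fun i ↦ pow_ne_zero _ hπ0)
      fun a c i j ha hc hij ↦ Fin.ext ?_
    rw [h.valuation_inj (smul_ne_zero ha (pow_ne_zero _ hπ0))
      (smul_ne_zero hc (pow_ne_zero _ hπ0)), hval a ha, hval c hc] at hij
    refine Nat.ModEq.eq_of_lt_of_lt (Int.natCast_modEq_iff.mp ?_) i.2 j.2
    exact (Int.modEq_iff_add_fac.mpr ⟨v a - v c, by linear_combination -hij⟩)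
  simpa using hlin.fintype_card_le_finrank

end Ramification

namespace IsNormalizedVal

variable {p : ℕ} [Fact p.Prime] {K : Type*} [Field K] {v : K → ℤ} {κ : K}

theorem isKummerGenerator (h : IsNormalizedVal p K v) (hκ0 : κ ≠ 0) (hκ : ¬ (p : ℤ) ∣ v κ)
    {L : Type*} [Field L] [Algebra K L] {θ : L} (hθ : θ ^ p = algebraMap K L κ)
    (hLθ : IntermediateField.adjoin K {θ} = ⊤) : IsKummerGenerator K p κ θ := by
  have hp : p.Prime := Fact.out
  have hirr : Irreducible (X ^ p - C κ) := X_pow_sub_C_irreducible_of_prime hp fun b hb ↦ by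
    have hb0 : b ≠ 0 := ne_zero_pow hp.ne_zero (hb ▸ hκ0)
    exact hκ ⟨v b, by rw [← hb, h.map_pow hb0]⟩
  have hroot : aeval θ (X ^ p - C κ) = 0 := by simp [hθ]
  have hminpoly : X ^ p - C κ = minpoly K θ :=
    minpoly.eq_of_irreducible_of_monic hirr hroot (monic_X_pow_sub_C κ hp.ne_zero)
  have hint : IsIntegral K θ := ⟨_, monic_X_pow_sub_C κ hp.ne_zero, hroot⟩
  refine ⟨hθ, hLθ, ?_⟩
  rw [← IntermediateField.finrank_top', ← hLθ, IntermediateField.adjoin.finrank hint, ← hminpoly,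
    natDegree_X_pow_sub_C]

theorem ramification_eq_of_isKummerGenerator (hκ0 : κ ≠ 0) (hκ : ¬ (p : ℤ) ∣ v κ)
    {L : Type*} [Field L] [Algebra K L] {θ : L} (hθ : IsKummerGenerator K p κ θ) {w : L → ℤ}
    (hw : IsNormalizedVal p L w) {e : ℕ} (he : 0 < e)
    (hext : ∀ x : K, x ≠ 0 → w (algebraMap K L x) = e * v x) : e = p := by
  have hp : p.Prime := Fact.out
  have := hθ.finiteDimensional
  have hdvd : (p : ℤ) ∣ e * v κ := ⟨w θ, by
    rw [← hext κ hκ0, ← hθ.pow_eq, hw.map_pow (hθ.ne_zero hκ0)]⟩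
  have hpe : p ∣ e :=
    Int.natCast_dvd_natCast.mp ((Nat.prime_iff_prime_int.mp hp).dvd_or_dvd hdvd |>.resolve_right hκ)
  have hle : e ≤ p := hθ.finrank_eq ▸ hw.ramification_le_finrank hext
  exact hle.antisymm (Nat.le_of_dvd he hpe)

end IsNormalizedVal

/-! ### Finite extensions of the `p`-adic numbers -/

section Henselian

theorem henselianLocalRing_of_isAdicComplete (R : Type*) [CommRing R] [IsLocalRing R]
    [IsAdicComplete (maximalIdeal R) R] : HenselianLocalRing R where
  is_henselian f hf a ha hunit :=
    HenselianRing.is_henselian (I := maximalIdeal R) f hf a ha (hunit.map (Ideal.Quotient.mk _))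

theorem exists_pow_eq_one_add_of_isUnit_natCast {R : Type*} [CommRing R] [HenselianLocalRing R]
    {n : ℕ} (hn : IsUnit (n : R)) {a : R} (ha : a ∈ maximalIdeal R) : ∃ z : R, z ^ n = 1 + a := by
  have hn0 : n ≠ 0 := by rintro rfl; simp at hn
  obtain ⟨z, hz, -⟩ := HenselianLocalRing.is_henselian (X ^ n - C (1 + a))
    (monic_X_pow_sub_C _ hn0) 1 (by simpa using ha) (by simpa [derivative_X_pow] using hn)
  exact ⟨z, by simpa [sub_eq_zero] using hz⟩

theorem padicInt_exists_pow_eq_one_add {p : ℕ} [Fact p.Prime] {n : ℕ} (hn : p.Coprime n)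
    (x : ℤ_[p]) : ∃ z : ℤ_[p], z ^ n = 1 + p * x := by
  have := henselianLocalRing_of_isAdicComplete ℤ_[p]
  have hp : (p : ℤ_[p]) ∈ maximalIdeal ℤ_[p] := by
    rw [PadicInt.maximalIdeal_eq_span_p]
    exact Ideal.mem_span_singleton_self _
  refine exists_pow_eq_one_add_of_isUnit_natCast ?_ (Ideal.mul_mem_right x _ hp)
  rwa [PadicInt.isUnit_iff, PadicInt.norm_natCast_eq_one_iff]

end Henselian

open ValuativeRel in
theorem henselianLocalRing_and_finite_residueField_integer {K Γ : Type*} [Field K]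
    [LinearOrderedCommGroupWithZero Γ] [ValuativeRel K] [TopologicalSpace K]
    [IsNonarchimedeanLocalField K] (v : Valuation K Γ) [v.Compatible] :
    HenselianLocalRing v.integer ∧ Finite (ResidueField v.integer) := by
  let _ : UniformSpace K := IsTopologicalAddGroup.rightUniformSpace K
  have := isUniformAddGroup_of_addCommGroup (G := K)
  have transport (S : Subring K) [IsLocalRing S] (hS : S = (valuation K).integer) :
      HenselianLocalRing S ∧ Finite (ResidueField S) := by
    subst hS
    have : IsAdicComplete (maximalIdeal (valuation K).integer) (valuation K).integer :=
      inferInstanceAs (IsAdicComplete 𝓂[K] 𝒪[K])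
    exact ⟨henselianLocalRing_of_isAdicComplete _, inferInstanceAs (Finite 𝓀[K])⟩
  exact transport _ (Subring.ext fun x ↦ (ValuativeRel.isEquiv v (valuation K)).le_one_iff_le_one)

namespace IsNormalizedVal

variable {p : ℕ} {K : Type*} [Field K] {v : K → ℤ} (h : IsNormalizedVal p K v)

theorem map_one_add_of_neg (h : IsNormalizedVal p K v) {x : K} (hx : v x < 0) (hx0 : x ≠ 0) :
    1 + x ≠ 0 ∧ v (1 + x) = v x := by
  have hval : h.valuation (1 + x) = h.valuation x := Valuation.map_add_eq_of_lt_right _ (by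
    rwa [_root_.map_one, h.one_lt_valuation_iff hx0])
  have hne : 1 + x ≠ 0 := by
    rwa [← h.valuation.ne_zero_iff, hval, h.valuation.ne_zero_iff]
  exact ⟨hne, (h.valuation_inj hne hx0).mp hval⟩

variable [Fact p.Prime] [Algebra ℚ_[p] K]

/- If `v x < 0`, then `1 + p * x ^ n` has valuation `v p + n * v x` for large `n`. It is an `n`-th
power when `n` is prime to `p`, and then `n` divides `v p`. -/
theorem valuation_algebraMap_padicInt_le_one (x : ℤ_[p]) :
    h.valuation (algebraMap ℚ_[p] K x) ≤ 1 := by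
  have := charZero_of_injective_algebraMap (algebraMap ℚ_[p] K).injective
  have hp0 : (p : K) ≠ 0 := NeZero.ne _
  by_contra! hx
  set y := algebraMap ℚ_[p] K x
  have hy0 : y ≠ 0 := by rintro hy; simp [hy] at hx
  have hvy : v y < 0 := (h.one_lt_valuation_iff hy0).mp hx
  obtain ⟨e, he⟩ := Int.eq_ofNat_of_zero_le h.2.2.2.le
  have he0 : 0 < e := by simpa [he] using h.2.2.2
  set n := p * e + 1
  have hen : e < n := Nat.lt_succ_of_le (Nat.le_mul_of_pos_left e (NeZero.pos p))
  obtain ⟨z, hz⟩ := padicInt_exists_pow_eq_one_add (p := p) (n := n) (by simp [n]) (x ^ n)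
  have hzK : (algebraMap ℚ_[p] K z) ^ n = 1 + p * y ^ n := by
    simpa using congrArg (fun a : ℤ_[p] ↦ algebraMap ℚ_[p] K a) hz
  have hvpy : v (p * y ^ n) = e + n * v y := by
    rw [h.1 _ _ hp0 (pow_ne_zero n hy0), h.map_pow hy0, he]
  obtain ⟨hne, hv⟩ := h.map_one_add_of_neg (x := p * y ^ n) (by rw [hvpy]; nlinarith)
    (mul_ne_zero hp0 (pow_ne_zero n hy0))
  rw [← hzK] at hne hv
  rw [h.map_pow (ne_zero_pow (by simp [n]) hne), hvpy] at hv
  have hdvd : (n : ℤ) ∣ e := ⟨v (algebraMap ℚ_[p] K z) - v y, by linear_combination -hv⟩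
  exact (Nat.le_of_dvd he0 (Int.natCast_dvd_natCast.mp hdvd)).not_gt hen

theorem exists_forall_norm_le_valuation_algebraMap_lt {y : K} (hy : y ≠ 0) :
    ∃ n : ℕ, ∀ x : ℚ_[p], ‖x‖ ≤ ‖(p ^ n : ℚ_[p])‖ →
      h.valuation (algebraMap ℚ_[p] K x) < h.valuation y := by
  have := charZero_of_injective_algebraMap (algebraMap ℚ_[p] K).injective
  have hp0 : (p : K) ≠ 0 := NeZero.ne _
  obtain ⟨n, hn⟩ := exists_pow_lt₀ ((h.valuation_lt_one_iff hp0).mpr h.2.2.2)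
    (Units.mk0 _ (h.valuation.ne_zero_iff.mpr hy))
  refine ⟨n, fun x hx ↦ ?_⟩
  have hpn : (p ^ n : ℚ_[p]) ≠ 0 := pow_ne_zero n (NeZero.ne _)
  have hz : ‖x / p ^ n‖ ≤ 1 := by
    rw [norm_div]
    exact div_le_one_of_le₀ hx (norm_nonneg _)
  calc h.valuation (algebraMap ℚ_[p] K x)
    _ = h.valuation p ^ n * h.valuation (algebraMap ℚ_[p] K (x / p ^ n)) := by
      rw [← _root_.map_pow, ← map_mul, ← map_natCast (algebraMap ℚ_[p] K), ← _root_.map_pow,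
        ← map_mul, mul_div_cancel₀ _ hpn]
    _ ≤ h.valuation p ^ n :=
      mul_le_of_le_one_right' (h.valuation_algebraMap_padicInt_le_one ⟨_, hz⟩)
    _ < h.valuation y := hn

theorem continuous_algebraMap_padic [ValuativeRel K] [TopologicalSpace K] [IsValuativeTopology K]
    [h.valuation.Compatible] : Continuous (algebraMap ℚ_[p] K) := by
  refine continuous_of_continuousAt_zero _ ?_
  rw [ContinuousAt, map_zero, (IsValuativeTopology.hasBasis_nhds_zero' K).tendsto_right_iff]
  intro γ hγ
  obtain ⟨y, rfl⟩ := ValuativeRel.valuation_surjective γ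
  have hy : y ≠ 0 := (Valuation.ne_zero_iff _).mp hγ
  obtain ⟨n, hn⟩ := h.exists_forall_norm_le_valuation_algebraMap_lt hy
  have hpn : 0 < ‖(p ^ n : ℚ_[p])‖ := norm_pos_iff.mpr (pow_ne_zero n (NeZero.ne _))
  filter_upwards [Metric.closedBall_mem_nhds 0 hpn] with x hx
  exact (ValuativeRel.isEquiv h.valuation (ValuativeRel.valuation K)).lt_iff_lt.mp
    (hn x (mem_closedBall_zero_iff.mp hx))

theorem henselianLocalRing_and_finite_residueField [FiniteDimensional ℚ_[p] K] :
    HenselianLocalRing h.valuation.integer ∧ Finite (ResidueField h.valuation.integer) := by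
  let _ := ValuativeRel.ofValuation h.valuation
  have := Valuation.Compatible.ofValuation h.valuation
  let _ := ValuativeRel.topologicalSpace K
  have := continuousSMul_of_algebraMap ℚ_[p] K h.continuous_algebraMap_padic
  have : ValuativeRel.IsNontrivial K := by
    obtain ⟨π, hπ0, hπ⟩ := h.2.2.1
    refine ⟨ValuativeRel.valuation K π, (Valuation.ne_zero_iff _).mpr hπ0, fun h1 ↦ ?_⟩
    rw [← (ValuativeRel.isEquiv h.valuation (ValuativeRel.valuation K)).eq_one_iff_eq_one,
      h.valuation_eq_one_iff hπ0, hπ] at h1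
    exact one_ne_zero h1
  have := LocallyCompactSpace.of_finiteDimensional_of_complete ℚ_[p] K
  have : IsNonarchimedeanLocalField K := {}
  exact henselianLocalRing_and_finite_residueField_integer h.valuation

end IsNormalizedVal

theorem not_surjective_pow_sub_self_of_finite {k : Type*} [Field k] [Finite k] {p : ℕ}
    (hp : p ≠ 0) : ¬ Function.Surjective fun y : k ↦ y ^ p - y := fun hsurj ↦ by
  have hval : (0 : k) ^ p - 0 = 1 ^ p - 1 := by simp [hp]
  exact zero_ne_one (Finite.injective_iff_surjective.mpr hsurj hval)

theorem kummer_extension_nonunit_conductor_general {p : ℕ} [Fact p.Prime] {K : Type*} [Field K]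
    {vK : K → ℤ} (hvK : IsNormalizedVal p K vK) [HenselianLocalRing hvK.valuation.integer]
    (hres : ¬ Function.Surjective fun y : ResidueField hvK.valuation.integer ↦ y ^ p - y)
    {ζ : K} (hζ : IsPrimitiveRoot ζ p) {κ : K} (hκ0 : κ ≠ 0) (hκ : ¬ (p : ℤ) ∣ vK κ)
    {L : Type v} [Field L] [Algebra K L] {θ : L} (hθ : θ ^ p = algebraMap K L κ)
    (hLθ : IntermediateField.adjoin K {θ} = ⊤) {vL : L → ℤ} (hvL : IsNormalizedVal p L vL)
    (hext : ∃ e : ℤ, 0 < e ∧ ∀ x : K, x ≠ 0 → vL (algebraMap K L x) = e * vK x) :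
    Module.finrank K L = p ∧ IsGalois K L ∧ IsCyclic (L ≃ₐ[K] L) ∧
      (∀ x : K, x ≠ 0 → vL (algebraMap K L x) = p * vK x) ∧
      ((p : ℤ) - 1) * (condExp vK L - 1) = p * vK p ∧
      ∀ (L' : Type v) [Field L'] [Algebra K L'], Module.finrank K L' = p →
        ((p : ℤ) - 1) * (condExp vK L' - 1) ≤ p * vK p := by
  have hgen := hvK.isKummerGenerator hκ0 hκ hθ hLθ
  obtain ⟨hgalois, hcyclic⟩ := hgen.isGalois_and_isCyclic hζ
  have he : p * vK p = ((p : ℤ) - 1) * (p * vK (ζ - 1)) := by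
    rw [← hvK.sub_one_mul_map_sub_one hζ, mul_left_comm]
  refine ⟨hgen.finrank_eq, hgalois, hcyclic, ?_, ?_, fun L' _ _ hL' ↦ ?_⟩
  · obtain ⟨e, he0, hext⟩ := hext
    lift e to ℕ using he0.le
    obtain rfl : e = p := IsNormalizedVal.ramification_eq_of_isKummerGenerator hκ0 hκ hgen hvL
      (Int.natCast_pos.mp he0) hext
    exact hext
  · rw [he, hvK.cast_condExp_eq hζ hres hκ0 hκ hgen, add_sub_cancel_right]
  · have hp : (0 : ℤ) ≤ p - 1 := sub_nonneg.mpr (mod_cast (Fact.out : p.Prime).one_le)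
    rw [he]
    exact mul_le_mul_of_nonneg_left (sub_le_iff_le_add.mpr (hvK.cast_condExp_le hζ hL')) hp

/-- Let `K` be a `p`-adic field containing the `p`-th roots of unity,
with absolute ramification index `e_K = v_K(p)`, and let `κ ∈ K^×` with `v_K(κ)` not
divisible by `p`.  Then `L = K(κ^{1/p})` is a totally ramified cyclic extension of
degree `p` with abelian conductor exponent `f(L/K) = p·e_K/(p−1) + 1` (expressed as
`(p−1)·(f(L/K) − 1) = p·e_K`), and this is the maximal possible conductor exponent for
cyclic degree-`p` extensions of `K`. -/
theorem kummer_extension_nonunit_conductor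
    (p : ℕ) [Fact p.Prime]
    (K : Type*) [Field K] [Algebra ℚ_[p] K] [FiniteDimensional ℚ_[p] K]
    (vK : K → ℤ) (hvK : IsNormalizedVal p K vK)
    (hμ : ∃ ζ : K, IsPrimitiveRoot ζ p)
    (κ : K) (hκ0 : κ ≠ 0) (hκ : ¬ ((p : ℤ) ∣ vK κ))
    (L : Type v) [Field L] [Algebra K L]
    (θ : L) (hθ : θ ^ p = algebraMap K L κ)
    (hLθ : IntermediateField.adjoin K {θ} = ⊤)
    (vL : L → ℤ) (hvL : IsNormalizedVal p L vL)
    (hext : ∃ e : ℤ, 0 < e ∧ ∀ x : K, x ≠ 0 → vL (algebraMap K L x) = e * vK x) :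
    Module.finrank K L = p ∧
    IsGalois K L ∧ IsCyclic (L ≃ₐ[K] L) ∧
    (∀ x : K, x ≠ 0 → vL (algebraMap K L x) = (p : ℤ) * vK x) ∧
    ((p : ℤ) - 1) * ((condExp vK L : ℤ) - 1) = (p : ℤ) * vK ((p : K)) ∧
    (∀ (L' : Type v) [Field L'] [Algebra K L'] [FiniteDimensional K L'],
      IsGalois K L' → IsCyclic (L' ≃ₐ[K] L') → Module.finrank K L' = p →
        ((p : ℤ) - 1) * ((condExp vK L' : ℤ) - 1) ≤ (p : ℤ) * vK ((p : K))) := by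
  obtain ⟨ζ, hζ⟩ := hμ
  obtain ⟨_, _⟩ := hvK.henselianLocalRing_and_finite_residueField
  have hres := not_surjective_pow_sub_self_of_finite (k := ResidueField hvK.valuation.integer)
    (NeZero.ne p)
  obtain ⟨hdeg, hgalois, hcyclic, hram, hcond, hmax⟩ :=
    kummer_extension_nonunit_conductor_general hvK hres hζ hκ0 hκ hθ hLθ hvL hext
  exact ⟨hdeg, hgalois, hcyclic, hram, hcond, fun L' _ _ _ _ _ ↦ hmax L'⟩
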